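/- Let Γ be a finite connected k-regular simple graph (k ≥ 3) of diameter d on n vertices, and let δ = M(k,d) − n be its defect. Then every real eigenvalue λ of the adjacency matrix of Γ with λ ≠ k satisfies |G_{k,d}(λ)| ≤ δ. -/

import Mathlib

/-- The Moore bound `M(k,d) = 1 + k + k(k-1) + ... + k(k-1)^(d-1)`. -/
def mooreBound (k d : ℕ) : ℕ := 1 + ∑ i ∈ Finset.range d, k * (k - 1) ^ i

/-- The polynomials `G_{k,i}(x)` defined by `G_{k,0}(x) = 1`, `G_{k,1}(x) = x + 1`,
`G_{k,i+1}(x) = x·G_{k,i}(x) − (k−1)·G_{k,i−1}(x)`. -/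
def Gpol (k : ℕ) : ℕ → ℝ → ℝ
  | 0, _ => 1
  | 1, x => x + 1
  | (i + 2), x => x * Gpol k (i + 1) x - (k - 1 : ℝ) * Gpol k i x

open Classical in
/-- Number of non-backtracking walks of length `i+1` starting `u, w` and ending at `v`. -/
noncomputable def nbw {V : Type*} [Fintype V] (G : SimpleGraph V) [DecidableRel G.Adj] :
    ℕ → V → V → V → ℝ
  | 0, _, w, v => if w = v then 1 else 0
  | (i + 1), u, w, v => ∑ x ∈ (G.neighborFinset w).erase u, nbw G i w x v

/-- Number of non-backtracking walks of length `i+1` from `u`, weighted by `f` at the end. -/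
noncomputable def nbF {V : Type*} [Fintype V] (G : SimpleGraph V) [DecidableRel G.Adj]
    (i : ℕ) (u v : V) : ℝ := ∑ w ∈ G.neighborFinset u, nbw G i u w v

section helpers
variable {V : Type*} [Fintype V] (G : SimpleGraph V) [DecidableRel G.Adj]

lemma nbw_nonneg (i : ℕ) (u w v : V) : 0 ≤ nbw G i u w v := by
  induction i generalizing u w with
  | zero => simp only [nbw]; split_ifs <;> norm_num
  | succ i ih => exact Finset.sum_nonneg fun x _ => ih _ _

lemma nbF_nonneg (i : ℕ) (u v : V) : 0 ≤ nbF G i u v :=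
  Finset.sum_nonneg fun _ _ => nbw_nonneg G _ _ _ _

lemma nbw_succ {u w : V} (h : G.Adj u w) (i : ℕ) (v : V) :
    nbw G (i + 1) u w v = nbF G i w v - nbw G i w u v := by
  classical
  have hu : u ∈ G.neighborFinset w := by simpa using h.symm
  have := Finset.add_sum_erase (G.neighborFinset w) (fun x => nbw G i w x v) hu
  have h2 : nbw G (i + 1) u w v = ∑ x ∈ (G.neighborFinset w).erase u, nbw G i w x v := by
    rw [nbw]
  rw [h2, nbF, ← this]
  ring

lemma nbF_two {k : ℕ} (hreg : G.IsRegularOfDegree k) (u v : V) :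
    nbF G 1 u v = (∑ w ∈ G.neighborFinset u, nbF G 0 w v) - k * nbw G 0 u u v := by
  rw [nbF, Finset.sum_congr rfl (fun w hw => nbw_succ G (by simpa using hw) 0 v),
    Finset.sum_sub_distrib]
  congr 1
  rw [Finset.sum_congr rfl (g := fun _ => nbw G 0 u u v) (fun w hw => by simp [nbw])]
  simp [hreg u]

lemma nbF_succ {k : ℕ} (hreg : G.IsRegularOfDegree k) (i : ℕ) (u v : V) :
    nbF G (i + 2) u v =
      (∑ w ∈ G.neighborFinset u, nbF G (i + 1) w v) - (k - 1) * nbF G i u v := by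
  rw [nbF, Finset.sum_congr rfl (fun w hw => nbw_succ G (by simpa using hw) (i + 1) v),
    Finset.sum_sub_distrib]
  congr 1
  rw [Finset.sum_congr rfl
    (fun w hw => nbw_succ G (SimpleGraph.Adj.symm (by simpa using hw)) i v), Finset.sum_sub_distrib]
  rw [← nbF]
  simp [hreg u]
  ring

lemma nbF_eig {k : ℕ} (hreg : G.IsRegularOfDegree k) (f : V → ℝ) (l : ℝ)
    (hf : ∀ u, ∑ w ∈ G.neighborFinset u, f w = l * f u) (i : ℕ) :
    (∀ u, ∑ v, nbF G i u v * f v = (Gpol k (i + 1) l - Gpol k i l) * f u) ∧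
    (∀ u, ∑ v, nbF G (i + 1) u v * f v = (Gpol k (i + 2) l - Gpol k (i + 1) l) * f u) := by
  classical
  have h0 : ∀ u, ∑ v, nbF G 0 u v * f v = (Gpol k 1 l - Gpol k 0 l) * f u := by
    intro u
    simp only [nbF, nbw, Finset.sum_mul]
    rw [Finset.sum_comm]
    simp [hf, Gpol]
  induction i with
  | zero =>
    refine ⟨h0, fun u => ?_⟩
    simp only [zero_add, nbF_two G hreg, sub_mul, Finset.sum_sub_distrib, Finset.sum_mul]
    rw [Finset.sum_comm]
    simp only [h0, ← Finset.mul_sum, hf]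
    simp [nbw, Gpol]
    ring
  | succ i ih =>
    refine ⟨ih.2, fun u => ?_⟩
    simp only [nbF_succ G hreg, sub_mul _ _ (f _), Finset.sum_sub_distrib, Finset.sum_mul]
    rw [Finset.sum_comm]
    simp only [ih.2, ← Finset.mul_sum, hf, mul_assoc _ (nbF G _ _ _), ih.1]
    simp only [Gpol]
    ring

lemma Gpol_self (k d : ℕ) (hk : 3 ≤ k) : Gpol k d k = mooreBound k d := by
  have key : ∀ i, Gpol k (i + 1) k - Gpol k i k = k * (k - 1 : ℝ) ^ i ∧
      Gpol k (i + 2) k - Gpol k (i + 1) k = k * (k - 1 : ℝ) ^ (i + 1) := by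
    intro i
    induction i with
    | zero => simp [Gpol]; ring
    | succ i ih =>
      refine ⟨ih.2, ?_⟩
      have h1 : Gpol k (i + 1 + 2) k - Gpol k (i + 1 + 1) k
        = k * (Gpol k (i + 2) k - Gpol k (i + 1) k)
          - (k - 1) * (Gpol k (i + 1) k - Gpol k i k) := by
        simp only [Gpol]; ring
      rw [h1, ih.1, ih.2]; ring
  induction d with
  | zero => simp [Gpol, mooreBound]
  | succ d ih =>
    have := (key d).1
    have h2 : mooreBound k (d + 1) = mooreBound k d + k * (k - 1) ^ d := by
      simp [mooreBound, Finset.sum_range_succ, add_assoc]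
    rw [h2]
    push_cast [Nat.cast_sub (show 1 ≤ k by omega)]
    linarith

lemma exists_closer (hconn : G.Connected) {u v : V} {i : ℕ} (h : G.dist u v = i + 1) :
    ∃ w, G.Adj u w ∧ G.dist w v = i := by
  obtain ⟨p, hp⟩ := hconn.exists_walk_length_eq_dist u v
  cases p with
  | nil => simp at h
  | cons hadj q =>
    rename_i w
    refine ⟨w, hadj, ?_⟩
    have h1 := SimpleGraph.dist_le q
    have h2 := hconn.dist_triangle (u := u) (v := w) (w := v)
    have h3 : G.dist u w = 1 := SimpleGraph.dist_eq_one_iff_adj.2 hadj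
    simp at hp
    omega

lemma nbw_ge (hconn : G.Connected) (i : ℕ) {u w v : V}
    (h : G.dist u v = i + 1) (h' : G.dist w v = i) : 1 ≤ nbw G i u w v := by
  classical
  induction i generalizing u w with
  | zero =>
    have : w = v := (hconn.dist_eq_zero_iff).1 h'
    simp [nbw, this]
  | succ i ih =>
    obtain ⟨x, hx, hd⟩ := exists_closer G hconn h'
    refine (ih h' hd).trans ?_
    rw [nbw]
    refine Finset.single_le_sum (f := fun x => nbw G i w x v)
      (fun _ _ => nbw_nonneg G _ _ _ _) ?_
    simp only [Finset.mem_erase, SimpleGraph.mem_neighborFinset]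
    refine ⟨?_, hx⟩
    rintro rfl
    omega

lemma nbF_ge (hconn : G.Connected) (i : ℕ) {u v : V}
    (h : G.dist u v = i + 1) : 1 ≤ nbF G i u v := by
  obtain ⟨w, hw, hd⟩ := exists_closer G hconn h
  exact (nbw_ge G hconn i h hd).trans (Finset.single_le_sum (f := fun x => nbw G i u x v)
      (fun _ _ => nbw_nonneg G _ _ _ _) (by simpa using hw))

/-- Total kernel: walks of length at most `d`. -/
lemma tot_ge (hconn : G.Connected) (d : ℕ) {u v : V} (h : G.dist u v ≤ d) :
    1 ≤ nbw G 0 u u v + ∑ i ∈ Finset.range d, nbF G i u v := by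
  have hs : 0 ≤ ∑ i ∈ Finset.range d, nbF G i u v :=
    Finset.sum_nonneg fun _ _ => nbF_nonneg G _ _ _
  rcases hd : G.dist u v with _ | i
  · have : u = v := (hconn.dist_eq_zero_iff).1 hd
    subst this
    simp only [nbw, if_true]
    linarith
  · have h1 := nbF_ge G hconn i hd
    have h2 := Finset.single_le_sum (f := fun i => nbF G i u v)
      (fun i _ => nbF_nonneg G i u v) (Finset.mem_range.2 (show i < d by omega))
    have h3 := nbw_nonneg G 0 u u v
    linarith

lemma tot_eig {k : ℕ} (hreg : G.IsRegularOfDegree k) (f : V → ℝ) (l : ℝ)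
    (hf : ∀ u, ∑ w ∈ G.neighborFinset u, f w = l * f u) (d : ℕ) (u : V) :
    ∑ v, (nbw G 0 u u v + ∑ i ∈ Finset.range d, nbF G i u v) * f v = Gpol k d l * f u := by
  classical
  induction d with
  | zero => simp [nbw, Gpol]
  | succ d ih =>
    simp only [Finset.sum_range_succ, ← add_assoc]
    simp only [add_mul _ (nbF G d _ _), Finset.sum_add_distrib, ih,
      (nbF_eig G hreg f l hf d).1]
    ring

end helpers

/-- If `Γ` is a finite connected `k`-regular graph (`k ≥ 3`) of diameter `d` on `n`
vertices with defect `δ = M(k,d) − n`, then every adjacency eigenvalue `λ ≠ k`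
satisfies `|G_{k,d}(λ)| ≤ δ`. -/
theorem stmt_6 (k d : ℕ) (hk : 3 ≤ k)
    (V : Type*) [Fintype V] (G : SimpleGraph V) [DecidableRel G.Adj]
    (hconn : G.Connected) (hreg : G.IsRegularOfDegree k) (hdiam : G.diam = d)
    (lam : ℝ) (hlam : lam ≠ (k : ℝ))
    (heig : ∃ v : V → ℝ, v ≠ 0 ∧ Matrix.mulVec (SimpleGraph.adjMatrix ℝ G) v = lam • v) :
    |Gpol k d lam| ≤ (mooreBound k d : ℝ) - (Fintype.card V : ℝ) := by
  classical
  obtain ⟨f, hf0, hf⟩ := heig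
  have hne : Nonempty V := hconn.nonempty
  have hA : ∀ u, ∑ w ∈ G.neighborFinset u, f w = lam * f u := by
    intro u
    have := congrFun hf u
    simpa using this
  have h1 : ∀ u, ∑ w ∈ G.neighborFinset u, (fun _ : V => (1:ℝ)) w = k * (fun _ : V => (1:ℝ)) u := by
    intro u
    simp [hreg u]
  have hdist : ∀ u v, G.dist u v ≤ d := by
    intro u v
    rw [← hdiam]
    exact SimpleGraph.dist_le_diam (SimpleGraph.connected_iff_ediam_ne_top.1 hconn)
  -- orthogonality
  have hsum : ∑ v, f v = 0 := by
    have e1 : ∑ u, ∑ w ∈ G.neighborFinset u, f w = lam * ∑ u, f u := by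
      rw [Finset.mul_sum]; exact Finset.sum_congr rfl fun u _ => hA u
    have e2 : ∑ u, ∑ w ∈ G.neighborFinset u, f w = k * ∑ u, f u := by
      rw [Finset.sum_comm' (t' := Finset.univ) (s' := fun w => G.neighborFinset w)
        (by intro x y; simp [G.adj_comm]), Finset.mul_sum]
      exact Finset.sum_congr rfl fun u _ => by simp [hreg u]
    have : (lam - k) * ∑ u, f u = 0 := by linarith
    exact (mul_eq_zero.1 this).resolve_left (sub_ne_zero.2 hlam)
  obtain ⟨u, hu⟩ := Finite.exists_max (fun v => |f v|)
  have hpos : 0 < |f u| := by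
    obtain ⟨x, hx⟩ := Function.ne_iff.1 hf0
    exact (abs_pos.2 hx).trans_le (hu x)
  set T : V → ℝ := fun v => nbw G 0 u u v + ∑ i ∈ Finset.range d, nbF G i u v with hT
  have hT1 : ∀ v, 1 ≤ T v := fun v => tot_ge G hconn d (hdist u v)
  have hTf : ∑ v, T v * f v = Gpol k d lam * f u := tot_eig G hreg f lam hA d u
  have hTs : ∑ v, T v = mooreBound k d := by
    have := tot_eig G hreg (fun _ => 1) k h1 d u
    simp only [mul_one, Gpol_self k d hk] at this
    exact this
  have hB : ∑ v, (T v - 1) * f v = Gpol k d lam * f u := by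
    simp only [sub_mul, one_mul, Finset.sum_sub_distrib, hTf, hsum, sub_zero]
  have hle : |Gpol k d lam| * |f u| ≤ (mooreBound k d - Fintype.card V) * |f u| := by
    rw [← abs_mul, ← hB]
    calc _ ≤ ∑ v, |(T v - 1) * f v| := Finset.abs_sum_le_sum_abs _ _
      _ ≤ ∑ v, (T v - 1) * |f u| := by
        refine Finset.sum_le_sum fun v _ => ?_
        rw [abs_mul, abs_of_nonneg (sub_nonneg.2 (hT1 v))]
        exact mul_le_mul_of_nonneg_left (hu v) (sub_nonneg.2 (hT1 v))
      _ = _ := by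
        rw [← Finset.sum_mul, Finset.sum_sub_distrib, hTs]
        simp
  exact le_of_mul_le_mul_right hle hpos
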